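/- arXiv:1902.01809 — 3 statements merged into one kernel-verified Lean document; each statement's English description precedes it below -/
import Mathlib

section
/- For every finite simple graph G, the modified Albertson index A*(G) is an even integer, i.e., 2 divides A*(G). -/
/-!
Modulo 2, `|d_u² − d_v²| ≡ d_u + d_v`, so each edge contributes the sum of the degrees of its
endpoints. Exchanging the order of summation over edges and their endpoints, each vertex `v` is
counted once for each of its `d_v` incident edges, so `A*(G) ≡ ∑ v, d_v² ≡ ∑ v, d_v (mod 2)`, which
is even by the degree-sum formula.
-/

open SimpleGraph Finset

/-- The modified Albertson index: `A*(G) = ∑_{uv ∈ E(G)} |d_u² − d_v²|`. -/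
noncomputable def modAlbertson {V : Type*} [Fintype V] (G : SimpleGraph V) : ℤ := by
  classical
  exact ∑ e ∈ G.edgeFinset,
    Sym2.lift ⟨fun u v => |((G.degree u : ℤ)) ^ 2 - ((G.degree v : ℤ)) ^ 2|,
      fun u v => abs_sub_comm _ _⟩ e
/-- Modulo 2, signs are irrelevant and every element equals its square. -/
lemma cast_abs_sq_sub_sq (a b : ℕ) :
    ((|(a : ℤ) ^ 2 - (b : ℤ) ^ 2| : ℤ) : ZMod 2) = a + b := by
  have hsq : ∀ x : ZMod 2, x ^ 2 = x := by decide
  rcases abs_choice ((a : ℤ) ^ 2 - (b : ℤ) ^ 2) with h | h <;> rw [h] <;> push_cast <;>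
    simp only [hsq, CharTwo.sub_eq_add, CharTwo.neg_eq]

/-- Double counting of incident vertex-edge pairs. -/
lemma sum_edges_sum_endpoints {V : Type*} [Fintype V] [DecidableEq V] (G : SimpleGraph V)
    [DecidableRel G.Adj] {R : Type*} [CommSemiring R] (f : V → R) :
    ∑ e ∈ G.edgeFinset, ∑ v with v ∈ e, f v = ∑ v, (G.degree v : R) * f v := by
  rw [Finset.sum_comm' (t' := univ) (s' := fun v => G.incidenceFinset v)
    (by intro e v; simp [incidenceSet])]
  simp

/-- The modified Albertson index of every finite simple graph is even. -/
theorem modAlbertson_even {V : Type*} [Fintype V] (G : SimpleGraph V) :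
    2 ∣ modAlbertson G := by
  classical
  apply (ZMod.intCast_zmod_eq_zero_iff_dvd _ 2).mp
  unfold modAlbertson
  rw [Int.cast_sum]
  have hterm : ∀ e ∈ G.edgeFinset,
      ((Sym2.lift ⟨fun u v => |((G.degree u : ℤ)) ^ 2 - ((G.degree v : ℤ)) ^ 2|,
        fun u v => abs_sub_comm _ _⟩ e : ℤ) : ZMod 2) =
      ∑ v with v ∈ e, (G.degree v : ZMod 2) := by
    intro e
    induction e with
    | _ u w =>
      intro he
      have hne : u ≠ w := (G.mem_edgeSet.mp (mem_edgeFinset.mp he)).ne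
      have hends : (univ.filter fun v => v ∈ s(u, w)) = {u, w} := by
        ext v
        simp
      rw [hends, Finset.sum_pair hne]
      exact cast_abs_sq_sub_sq _ _
  rw [Finset.sum_congr rfl hterm, sum_edges_sum_endpoints]
  have hidem : ∀ x : ZMod 2, x * x = x := by decide
  simp only [hidem]
  rw [← Nat.cast_sum, G.sum_degrees_eq_twice_card_edges, Nat.cast_mul]
  exact mul_eq_zero_of_left (by decide) _
end

section
/- Let uv be an edge of a finite simple graph G such that either (d_u = 1 and d_v ≥ 2) or at least one of u, v has degree 2. If G' is the graph obtained from G by subdividing the edge uv, then A*(G') = A*(G). -/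
/-!
Subdivision keeps the degrees of the old vertices, because at an endpoint of `uv` the new vertex
merely replaces the other endpoint as a neighbour. Hence every edge other than `uv` contributes
the same amount to both indices (`modAlbertson_subdivide_add`), and the claim reduces to
`|d_u² - 4| + |d_v² - 4| = |d_u² - d_v²|`, which says that `2` lies between `d_u` and `d_v`.
-/

open SimpleGraph Finset

/-- The graph obtained from `G` by subdividing the edge `uv`: the edge `uv` is
deleted and a new vertex (`none`) adjacent exactly to `u` and `v` is added. -/
def subdivide {V : Type*} (G : SimpleGraph V) (u v : V) : SimpleGraph (Option V) :=
  ((G.deleteEdges {s(u, v)}).map Function.Embedding.some) ⊔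
    SimpleGraph.fromEdgeSet {s(some u, none), s(some v, none)}

theorem subdivide_adj_some_some {V : Type*} (G : SimpleGraph V) (u v a b : V) :
    (subdivide G u v).Adj (some a) (some b) ↔ G.Adj a b ∧ s(a, b) ≠ s(u, v) := by
  simp only [subdivide, SimpleGraph.sup_adj, SimpleGraph.map_adj]
  simp

theorem subdivide_adj_some_none {V : Type*} (G : SimpleGraph V) (u v a : V) :
    (subdivide G u v).Adj (some a) none ↔ a = u ∨ a = v := by
  simp only [subdivide, SimpleGraph.sup_adj, SimpleGraph.map_adj]
  simp

theorem degree_subdivide_some {V : Type*} (G : SimpleGraph V) {u v : V} (hadj : G.Adj u v) (w : V)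
    [Fintype ((subdivide G u v).neighborSet (some w))] [Fintype (G.neighborSet w)] :
    (subdivide G u v).degree (some w) = G.degree w := by
  classical
  symm
  -- The new vertex takes the place of the neighbour joined to `w` by the deleted edge, if any.
  refine Finset.card_bij (fun x _ => if s(w, x) = s(u, v) then none else some x) ?_ ?_ ?_
  · intro x hx
    rw [mem_neighborFinset] at hx ⊢
    split_ifs with h
    · rw [subdivide_adj_some_none]
      grind [Sym2.eq_iff]
    · exact (subdivide_adj_some_some ..).2 ⟨hx, h⟩
  · intro x _ y _ h
    grind [Sym2.eq_iff]
  · rintro (_ | y) hy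
    · rw [mem_neighborFinset, subdivide_adj_some_none] at hy
      rcases hy with rfl | rfl
      · exact ⟨v, by simpa using hadj, by simp⟩
      · exact ⟨u, by simpa using hadj.symm, by simp [Sym2.eq_swap]⟩
    · rw [mem_neighborFinset, subdivide_adj_some_some] at hy
      exact ⟨y, by simpa using hy.1, if_neg hy.2⟩

theorem degree_subdivide_none {V : Type*} (G : SimpleGraph V) {u v : V} (hadj : G.Adj u v)
    [Fintype ((subdivide G u v).neighborSet none)] :
    (subdivide G u v).degree none = 2 := by
  classical
  have h : (subdivide G u v).neighborFinset none = {some u, some v} := by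
    ext (_ | a)
    · simp
    · rw [mem_neighborFinset, SimpleGraph.adj_comm, subdivide_adj_some_none]
      simp
  rw [SimpleGraph.degree, h, Finset.card_pair (by simpa using hadj.ne)]

theorem map_some_ne {V : Type*} (x : Option V) (e : Sym2 V) : Sym2.map some e ≠ s(x, none) := by
  intro h
  have : (none : Option V) ∈ Sym2.map some e := h ▸ Sym2.mem_mk_right _ _
  simp [Sym2.mem_map] at this

theorem edgeFinset_subdivide {V : Type*} [DecidableEq V] (G : SimpleGraph V) {u v : V}
    [Fintype (subdivide G u v).edgeSet] [Fintype G.edgeSet] :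
    (subdivide G u v).edgeFinset =
      insert s(some u, none) (insert s(some v, none)
        ((G.edgeFinset.erase s(u, v)).image (Sym2.map some))) := by
  ext e
  induction e using Sym2.ind with
  | _ a b =>
  have key : ∀ a b : V, (∃ e, (e ≠ s(u, v) ∧ e ∈ G.edgeSet) ∧ Sym2.map some e = s(some a, some b)) ↔
      G.Adj a b ∧ s(a, b) ≠ s(u, v) := by
    intro a b
    constructor
    · rintro ⟨e, ⟨h1, h2⟩, h3⟩
      obtain rfl : e = s(a, b) := Sym2.map.injective (Option.some_injective V) h3
      exact ⟨h2, h1⟩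
    · exact fun h => ⟨s(a, b), ⟨h.2, h.1⟩, rfl⟩
  rw [mem_edgeFinset, mem_edgeSet]
  simp only [Finset.mem_insert, Finset.mem_image, Finset.mem_erase, mem_edgeFinset]
  rcases a with _ | a <;> rcases b with _ | b
  · simp [map_some_ne]
  · rw [SimpleGraph.adj_comm, subdivide_adj_some_none, Sym2.eq_swap]
    simp [map_some_ne]
  · rw [subdivide_adj_some_none]
    simp [map_some_ne]
  · rw [key, subdivide_adj_some_some]
    simp

/-- The index does not depend on the instances used to form the edge set and the degrees. -/
theorem modAlbertson_eq {V : Type*} [Fintype V] (G : SimpleGraph V) [Fintype G.edgeSet]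
    [∀ w, Fintype (G.neighborSet w)] :
    modAlbertson G = ∑ e ∈ G.edgeFinset,
      Sym2.lift ⟨fun u v => |((G.degree u : ℤ)) ^ 2 - ((G.degree v : ℤ)) ^ 2|,
        fun _ _ => abs_sub_comm _ _⟩ e := by
  unfold modAlbertson
  congr!

/-- The effect of a subdivision on the index, for an arbitrary edge `uv`. -/
theorem modAlbertson_subdivide_add {V : Type*} [Fintype V] (G : SimpleGraph V)
    [DecidableRel G.Adj] {u v : V} (hadj : G.Adj u v) :
    modAlbertson (subdivide G u v) + |(G.degree u : ℤ) ^ 2 - (G.degree v : ℤ) ^ 2| =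
      modAlbertson G + |(G.degree u : ℤ) ^ 2 - 4| + |(G.degree v : ℤ) ^ 2 - 4| := by
  classical
  rw [modAlbertson_eq, modAlbertson_eq, edgeFinset_subdivide, Finset.sum_insert,
    Finset.sum_insert, Finset.sum_image]
  · rw [← Finset.add_sum_erase G.edgeFinset _ (mem_edgeFinset.2 hadj : s(u, v) ∈ G.edgeFinset)]
    have hs : ∀ e ∈ G.edgeFinset.erase s(u, v),
        Sym2.lift ⟨fun a b => |(((subdivide G u v).degree a : ℤ)) ^ 2 -
            (((subdivide G u v).degree b : ℤ)) ^ 2|, fun a b => abs_sub_comm _ _⟩ (Sym2.map some e) =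
        Sym2.lift ⟨fun a b => |((G.degree a : ℤ)) ^ 2 - ((G.degree b : ℤ)) ^ 2|,
          fun a b => abs_sub_comm _ _⟩ e := by
      intro e _
      induction e using Sym2.ind with
      | _ a b => simp [degree_subdivide_some G hadj]
    rw [Finset.sum_congr rfl hs]
    simp only [Sym2.lift_mk, degree_subdivide_some G hadj, degree_subdivide_none G hadj]
    norm_num
    ring
  · exact (Sym2.map.injective (Option.some_injective V)).injOn
  · simp [map_some_ne]
  · simp [map_some_ne, hadj.ne]

/-- Subdividing an edge `uv` with `d_u = 1 ≤ 2 ≤ d_v`, or with one endpoint of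
degree `2`, leaves `A*` unchanged. -/
theorem modAlbertson_subdivide_eq {V : Type*} [Fintype V]
    (G : SimpleGraph V) [DecidableRel G.Adj] (u v : V) (hadj : G.Adj u v)
    (hdeg : (G.degree u = 1 ∧ 2 ≤ G.degree v) ∨ G.degree u = 2 ∨ G.degree v = 2) :
    modAlbertson (subdivide G u v) = modAlbertson G := by
  have h := modAlbertson_subdivide_add G hadj
  suffices |(G.degree u : ℤ) ^ 2 - (G.degree v : ℤ) ^ 2| =
      |(G.degree u : ℤ) ^ 2 - 4| + |(G.degree v : ℤ) ^ 2 - 4| by linarith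
  rcases hdeg with ⟨hu, hv⟩ | hu | hv
  · have hv' : (2 : ℤ) ≤ G.degree v := by exact_mod_cast hv
    rw [hu, abs_of_nonpos (by norm_num; nlinarith), abs_of_nonpos (by norm_num),
      abs_of_nonneg (by nlinarith)]
    push_cast
    ring
  · rw [hu, abs_sub_comm]
    norm_num
  · rw [hv]
    norm_num
end

section
/- For every integer t ∈ {0, 3, 4, 5} ∪ {8, 9, 10, …}, there exists a finite connected simple graph G with A*(G) = 2t. -/
/-!
Call an edge `uv` of a connected graph `G` *cubic* if `u` and `v` both have degree `3`. Subdividing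
a cubic edge by a new vertex `w` and hanging a leaf on `w` leaves all old degrees unchanged and
gives `w` degree `3`, so the only new nonzero contribution is the `3² - 1² = 8` of the pendant edge
(`CubicEdgeGraph.step`). The edge `uw` is again cubic, so the operation can be iterated, and the
values `t = A*/2` reached from one graph form an arithmetic progression of difference `4`.

It remains to exhibit starting graphs with a cubic edge for `t = 0, 5, 10, 11`, one for each residue
modulo `4`: `K₄`, `K₄` with one edge subdivided, `K₄` with two disjoint edges subdivided, and a
graph on nine vertices with degrees in `{1, 3, 4}`. Their progressions cover every value in the
statement except `t = 3`, which is attained by the path on three vertices.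
-/


open SimpleGraph Finset

/-- The ordered-pair form of the modified Albertson index: each edge is counted once in each
direction. -/
lemma two_mul_modAlbertson {V : Type*} [Fintype V] (G : SimpleGraph V) [DecidableRel G.Adj]
    (d : V → ℤ) (hd : ∀ x, (G.degree x : ℤ) = d x) :
    2 * modAlbertson G = ∑ x, ∑ y, if G.Adj x y then |d x ^ 2 - d y ^ 2| else 0 := by
  classical
  set f : Sym2 V → ℤ := Sym2.lift ⟨fun u v => |d u ^ 2 - d v ^ 2|, fun u v => abs_sub_comm _ _⟩
    with hf
  have h1 : modAlbertson G = ∑ e ∈ G.edgeFinset, f e := by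
    unfold modAlbertson
    simp only [hf, ← hd]
    refine Finset.sum_congr (by ext; simp) fun e _ => ?_
    congr!
  have h2 : ∑ a : G.Dart, f a.edge = ∑ e ∈ G.edgeFinset, 2 * f e := by
    rw [← Finset.sum_fiberwise_of_maps_to (s := univ) (t := G.edgeFinset) (g := Dart.edge)
      (fun a _ => by simp)]
    refine Finset.sum_congr rfl fun e he => ?_
    rw [Finset.sum_congr rfl (g := fun _ => f e) (fun a ha => by rw [(mem_filter.1 ha).2]),
      sum_const, G.dart_edge_fiber_card e (by simpa using he)]
    simp
  rw [h1, mul_sum, ← h2, ← Fintype.sum_prod_type', ← sum_filter]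
  refine sum_bij' (fun a _ => (a.fst, a.snd)) (fun p h => ⟨p, (mem_filter.1 h).2⟩) ?_ ?_ ?_ ?_ ?_
  all_goals simp [hf, Dart.edge]

lemma degree_eq_sum {V : Type*} [Fintype V] (G : SimpleGraph V) [DecidableRel G.Adj] (x : V) :
    (G.degree x : ℤ) = ∑ y, if G.Adj x y then 1 else 0 := by
  rw [← card_neighborFinset_eq_degree, neighborFinset_eq_filter]
  simp

open Classical in
/-- The value `t` is attained by a connected graph having an edge whose two ends have degree `3`. -/
def CubicEdgeGraph (t : ℕ) : Prop :=
  ∃ (V : Type) (_ : Fintype V) (G : SimpleGraph V),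
    G.Connected ∧ modAlbertson G = 2 * t ∧ ∃ u v, G.Adj u v ∧ G.degree u = 3 ∧ G.degree v = 3

/-- The graph obtained from `G` by subdividing the edge `uv` with a new vertex `Sum.inr false` and
attaching the leaf `Sum.inr true` to it. -/
def subdivideWithLeaf {V : Type} (G : SimpleGraph V) (u v : V) : SimpleGraph (V ⊕ Bool) where
  Adj a b := match a, b with
    | .inl x, .inl y => G.Adj x y ∧ ¬(x = u ∧ y = v) ∧ ¬(x = v ∧ y = u)
    | .inl x, .inr b => b = false ∧ (x = u ∨ x = v)
    | .inr b, .inl x => b = false ∧ (x = u ∨ x = v)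
    | .inr a, .inr b => a ≠ b
  symm := ⟨by
    rintro (x | a) (y | b) h
    · exact ⟨h.1.symm, fun k => h.2.2 k.symm, fun k => h.2.1 k.symm⟩
    · exact h
    · exact h
    · exact Ne.symm h⟩
  loopless := ⟨by
    rintro (x | a) h
    · exact G.irrefl h.1
    · exact h rfl⟩

lemma subdivideWithLeaf_connected {V : Type} {G : SimpleGraph V} (hG : G.Connected) (u v : V) :
    (subdivideWithLeaf G u v).Connected := by
  set H := subdivideWithLeaf G u v with hH
  have hu : H.Adj (.inl u) (.inr false) := ⟨rfl, .inl rfl⟩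
  have hv : H.Adj (.inl v) (.inr false) := ⟨rfl, .inr rfl⟩
  have hl : H.Adj (.inr false) (.inr true) := Bool.false_ne_true
  have key : ∀ x y, G.Adj x y → H.Reachable (.inl x) (.inl y) := by
    intro x y h
    by_cases h1 : x = u ∧ y = v
    · rw [h1.1, h1.2]
      exact hu.reachable.trans hv.reachable.symm
    by_cases h2 : x = v ∧ y = u
    · rw [h2.1, h2.2]
      exact hv.reachable.trans hu.reachable.symm
    exact Adj.reachable (show H.Adj (.inl x) (.inl y) from ⟨h, h1, h2⟩)
  have key2 : ∀ x y, G.Walk x y → H.Reachable (.inl x) (.inl y) := by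
    intro x y p
    induction p with
    | nil => exact Reachable.refl _
    | cons h _ ih => exact (key _ _ h).trans ih
  rw [connected_iff_exists_forall_reachable]
  refine ⟨.inl u, ?_⟩
  rintro (x | _ | _)
  · obtain ⟨p⟩ := hG.preconnected u x
    exact key2 _ _ p
  · exact hu.reachable
  · exact hu.reachable.trans hl.reachable

lemma CubicEdgeGraph.step {t : ℕ} (h : CubicEdgeGraph t) : CubicEdgeGraph (t + 4) := by
  classical
  obtain ⟨V, _, G, hG, hA, u, v, huv, hu, hv⟩ := h
  have hne : u ≠ v := huv.ne
  set H := subdivideWithLeaf G u v with hH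
  have ll : ∀ x y, H.Adj (.inl x) (.inl y) ↔
    G.Adj x y ∧ ¬(x = u ∧ y = v) ∧ ¬(x = v ∧ y = u) := fun _ _ => Iff.rfl
  have lr : ∀ x b, H.Adj (.inl x) (.inr b) ↔ b = false ∧ (x = u ∨ x = v) := fun _ _ => Iff.rfl
  have rl : ∀ x b, H.Adj (.inr b) (.inl x) ↔ b = false ∧ (x = u ∨ x = v) := fun _ _ => Iff.rfl
  have rr : ∀ a b, H.Adj (.inr a) (.inr b) ↔ a ≠ b := fun _ _ => Iff.rfl
  have ends : ∀ c : ℤ, (∑ x : V, if x = u ∨ x = v then c else 0) = 2 * c := by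
    intro c
    have : ∀ x, (if x = u ∨ x = v then c else 0)
        = (if x = u then c else 0) + (if x = v then c else 0) := by
      intro x
      by_cases h1 : x = u <;> by_cases h2 : x = v <;> simp_all
    simp only [this, sum_add_distrib, sum_ite_eq', mem_univ, if_true]
    ring
  let d : V ⊕ Bool → ℤ := Sum.elim (fun x => G.degree x) (fun b => if b then 1 else 3)
  have hd : ∀ a, (H.degree a : ℤ) = d a := by
    rintro (x | b)
    · rw [degree_eq_sum, Fintype.sum_sum_type]
      simp only [ll, lr, Fintype.sum_bool, d, Sum.elim_inl]
      rw [degree_eq_sum]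
      -- An end of `uv` loses its neighbour across `uv` and gains the subdividing vertex.
      have : ∀ y, (if G.Adj x y ∧ ¬(x = u ∧ y = v) ∧ ¬(x = v ∧ y = u) then (1 : ℤ) else 0)
          = (if G.Adj x y then 1 else 0) - (if y = v then if x = u then 1 else 0 else 0)
            - (if y = u then if x = v then 1 else 0 else 0) := by
        intro y
        have := huv.symm
        by_cases h1 : x = u <;> by_cases h2 : x = v <;> by_cases h3 : y = u <;>
          by_cases h4 : y = v <;> simp_all
      simp only [this, sum_sub_distrib, sum_ite_eq', mem_univ, if_true]
      by_cases h1 : x = u <;> by_cases h2 : x = v <;> simp_all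
    · rw [degree_eq_sum, Fintype.sum_sum_type]
      cases b
      · simp [rl, rr, ends, d]
      · simp [rl, rr, d]
  refine ⟨V ⊕ Bool, inferInstance, H, subdivideWithLeaf_connected hG u v, ?_,
    .inl u, .inr false, ⟨rfl, .inl rfl⟩, ?_, ?_⟩
  · have e1 := two_mul_modAlbertson G (fun x => (G.degree x : ℤ)) (fun _ => rfl)
    have e2 := two_mul_modAlbertson H d hd
    -- The removed edge had equal end degrees, so it contributed nothing to the sum over `G`.
    have a1 : ∀ x y, (if G.Adj x y ∧ ¬(x = u ∧ y = v) ∧ ¬(x = v ∧ y = u)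
        then |(G.degree x : ℤ) ^ 2 - (G.degree y : ℤ) ^ 2| else 0)
        = if G.Adj x y then |(G.degree x : ℤ) ^ 2 - (G.degree y : ℤ) ^ 2| else 0 := by
      intro x y
      by_cases h1 : x = u ∧ y = v
      · rw [h1.1, h1.2, hu, hv]
        simp
      by_cases h2 : x = v ∧ y = u
      · rw [h2.1, h2.2, hu, hv]
        simp
      simp [h1, h2]
    have a2 : ∀ x, (if x = u ∨ x = v then |(G.degree x : ℤ) ^ 2 - 9| else 0) = 0 := by
      intro x
      split_ifs with h
      · rcases h with rfl | rfl <;> simp [hu, hv]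
      · rfl
    have a3 : ∀ x, (if x = u ∨ x = v then |9 - (G.degree x : ℤ) ^ 2| else 0) = 0 := by
      intro x
      rw [abs_sub_comm, a2]
    simp only [Fintype.sum_sum_type, ll, lr, rl, rr, Fintype.sum_bool, d, Sum.elim_inl,
      Sum.elim_inr, a1, sum_add_distrib] at e2
    simp [a2, a3] at e2
    rw [← e1] at e2
    push_cast
    linarith
  · have := hd (.inl u)
    simp only [d, Sum.elim_inl, hu] at this
    exact_mod_cast this
  · have := hd (.inr false)
    simp only [d, Sum.elim_inr] at this
    exact_mod_cast this

lemma CubicEdgeGraph.add_mul {t : ℕ} (h : CubicEdgeGraph t) (k : ℕ) :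
    CubicEdgeGraph (t + 4 * k) := by
  induction k with
  | zero => exact h
  | succ k ih => exact ih.step

/-- The graph on `Fin n` whose edges are the pairs in a list, read as unordered pairs; pairs `(i, i)`
are ignored. -/
def listGraph (n : ℕ) (l : List (Fin n × Fin n)) : SimpleGraph (Fin n) where
  Adj i j := i ≠ j ∧ ((i, j) ∈ l ∨ (j, i) ∈ l)
  symm := ⟨fun _ _ h => ⟨h.1.symm, h.2.symm⟩⟩
  loopless := ⟨fun _ h => h.1 rfl⟩

instance (n : ℕ) (l : List (Fin n × Fin n)) : DecidableRel (listGraph n l).Adj :=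
  fun i j => inferInstanceAs (Decidable (i ≠ j ∧ ((i, j) ∈ l ∨ (j, i) ∈ l)))

/-- A graph on `{0, …, n}` is connected if every nonzero vertex has a smaller neighbour. -/
lemma connected_of_smaller_neighbour {n : ℕ} (G : SimpleGraph (Fin (n + 1)))
    (h : ∀ i, i ≠ 0 → ∃ j, j < i ∧ G.Adj j i) : G.Connected := by
  rw [connected_iff_exists_forall_reachable]
  refine ⟨0, fun i => ?_⟩
  induction i using WellFoundedLT.induction with
  | ind i ih =>
    by_cases hi : i = 0
    · rw [hi]
    · obtain ⟨j, hj, ha⟩ := h i hi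
      exact (ih j hj).trans ha.reachable

/-- Reduces the claim that an explicit graph with degree sequence `d` has `A* = 2t` to decidable
conditions. -/
lemma listGraph_modAlbertson {n : ℕ} (l : List (Fin n × Fin n)) (d : Fin n → ℤ) (t : ℕ)
    (hd : ∀ x, (∑ y, if (listGraph n l).Adj x y then 1 else 0) = d x)
    (hs : (∑ x, ∑ y, if (listGraph n l).Adj x y then |d x ^ 2 - d y ^ 2| else 0) = 4 * t) :
    modAlbertson (listGraph n l) = 2 * t := by
  have := two_mul_modAlbertson (listGraph n l) d (fun x => by rw [degree_eq_sum, hd])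
  linarith

lemma cubicEdgeGraph_listGraph {n : ℕ} (l : List (Fin (n + 1) × Fin (n + 1)))
    (d : Fin (n + 1) → ℤ) (t : ℕ) (u v : Fin (n + 1))
    (hc : ∀ i, i ≠ 0 → ∃ j, j < i ∧ (listGraph (n + 1) l).Adj j i)
    (hd : ∀ x, (∑ y, if (listGraph (n + 1) l).Adj x y then 1 else 0) = d x)
    (hs : (∑ x, ∑ y, if (listGraph (n + 1) l).Adj x y then |d x ^ 2 - d y ^ 2| else 0) = 4 * t)
    (huv : (listGraph (n + 1) l).Adj u v) (hu : d u = 3) (hv : d v = 3) :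
    CubicEdgeGraph t := by
  classical
  have hdeg : ∀ x, ((listGraph (n + 1) l).degree x : ℤ) = d x :=
    fun x => by rw [degree_eq_sum, hd]
  refine ⟨_, inferInstance, listGraph (n + 1) l, connected_of_smaller_neighbour _ hc,
    listGraph_modAlbertson l d t hd hs, u, v, huv, ?_, ?_⟩
  · have := hdeg u
    rw [hu] at this
    convert! (by exact_mod_cast this : (listGraph (n + 1) l).degree u = 3)
  · have := hdeg v
    rw [hv] at this
    convert! (by exact_mod_cast this : (listGraph (n + 1) l).degree v = 3)

/-- `K₄`. -/
lemma cubicEdgeGraph_zero : CubicEdgeGraph 0 :=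
  cubicEdgeGraph_listGraph (n := 3) [(0, 1), (0, 2), (0, 3), (1, 2), (1, 3), (2, 3)]
    ![3, 3, 3, 3] 0 0 1 (by decide) (by decide) (by decide) (by decide) rfl rfl

/-- `K₄` with the edge `23` subdivided by the vertex `4`. -/
lemma cubicEdgeGraph_five : CubicEdgeGraph 5 :=
  cubicEdgeGraph_listGraph (n := 4) [(0, 1), (0, 2), (0, 3), (1, 2), (1, 3), (2, 4), (3, 4)]
    ![3, 3, 3, 3, 2] 5 0 1 (by decide) (by decide) (by decide +kernel) (by decide) rfl rfl

/-- `K₄` with the disjoint edges `02` and `13` subdivided by the vertices `4` and `5`. -/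
lemma cubicEdgeGraph_ten : CubicEdgeGraph 10 :=
  cubicEdgeGraph_listGraph (n := 5)
    [(0, 1), (0, 3), (2, 1), (2, 3), (0, 4), (2, 4), (1, 5), (3, 5)]
    ![3, 3, 3, 3, 2, 2] 10 0 1 (by decide) (by decide) (by decide +kernel) (by decide) rfl rfl

/-- The graph `K₅` minus the edge `04`, a triangle `567` joined to it by the edges `05` and `46`,
and a leaf `8` attached to `7`. Only the edges `05`, `46` and `78` join vertices of distinct
degrees, contributing `7 + 7 + 8 = 22`. -/
lemma cubicEdgeGraph_eleven : CubicEdgeGraph 11 :=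
  cubicEdgeGraph_listGraph (n := 8)
    [(0, 1), (0, 2), (0, 3), (1, 2), (1, 3), (1, 4), (2, 3), (2, 4), (3, 4),
      (0, 5), (4, 6), (5, 6), (5, 7), (6, 7), (7, 8)]
    ![4, 4, 4, 4, 4, 3, 3, 3, 1] 11 5 6 (by decide +kernel) (by decide +kernel)
    (by decide +kernel) (by decide) rfl rfl

/-- For every `t ∈ {0, 3, 4, 5} ∪ {8, 9, 10, …}` there exists a finite connected
simple graph `G` with `A*(G) = 2t`. -/
theorem modAlbertson_exists (t : ℕ)
    (ht : t = 0 ∨ t = 3 ∨ t = 4 ∨ t = 5 ∨ 8 ≤ t) :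
    ∃ (V : Type) (_ : Fintype V) (G : SimpleGraph V),
      G.Connected ∧ modAlbertson G = 2 * t := by
  by_cases h3 : t = 3
  · subst h3
    exact ⟨Fin 3, inferInstance, listGraph 3 [(0, 1), (1, 2)],
      connected_of_smaller_neighbour _ (by decide),
      listGraph_modAlbertson [(0, 1), (1, 2)] ![1, 2, 1] 3 (by decide) (by decide +kernel)⟩
  · have key : CubicEdgeGraph t := by
      have h : ∃ k, t = 0 + 4 * k ∨ t = 5 + 4 * k ∨ t = 10 + 4 * k ∨ t = 11 + 4 * k := by
        refine ⟨if t % 4 = 0 then t / 4 else if t % 4 = 1 then (t - 5) / 4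
          else if t % 4 = 2 then (t - 10) / 4 else (t - 11) / 4, ?_⟩
        split_ifs <;> omega
      obtain ⟨k, rfl | rfl | rfl | rfl⟩ := h
      · exact cubicEdgeGraph_zero.add_mul k
      · exact cubicEdgeGraph_five.add_mul k
      · exact cubicEdgeGraph_ten.add_mul k
      · exact cubicEdgeGraph_eleven.add_mul k
    obtain ⟨V, i, G, hG, hA, -⟩ := key
    exact ⟨V, i, G, hG, hA⟩
end
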